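/- Let K be a field of characteristic zero equipped with a derivation δ, let K₀ ⊆ K be a subfield, and let u ∈ K be such that δ(b) lies in the subfield K₀(u) for every b ∈ K₀. If for some h ∈ ℕ the element δ^h(u) is algebraic over the subfield K₀(u, δ(u), …, δ^{h−1}(u)), then δ^{h+1}(u) is algebraic over the subfield K₀(u, δ(u), …, δ^h(u)). -/

import Mathlib

/-!
Write `F n = K₀(u, δ u, …, δ^{n-1} u)` and `x = δ^h u`. The derivation maps `F h` into `F (h + 1)`,
since it does so on generators. Differentiating `p(x) = 0`, where `p` is the minimal polynomial of
`x` over `F h`, gives `p^δ(x) + p'(x) δ x = 0`, where `p^δ` has coefficients in `F (h + 1)`. When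
`x` is separable over `F h`, as always in characteristic zero, `p'(x) ≠ 0`, so `δ x` is a quotient
of elements of `F (h + 1)`; thus `δ^{h+1} u` even lies in `F (h + 1)`.
-/

open Polynomial

lemma exists_derivation_coe_eq {A : Type*} [CommRing A] (δ : A → A)
    (hadd : ∀ a b, δ (a + b) = δ a + δ b) (hmul : ∀ a b, δ (a * b) = δ a * b + a * δ b) :
    ∃ D : Derivation ℤ A A, ⇑D = δ := by
  refine ⟨.mk' (AddMonoidHom.mk' δ hadd).toIntLinearMap fun a b => ?_, rfl⟩
  change δ (a * b) = a * δ b + b * δ a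
  rw [hmul, mul_comm (δ a), add_comm]

lemma derivation_mem_of_mem_closure {K : Type*} [Field K] (D : Derivation ℤ K K) {s : Set K}
    {E : Subfield K} (hsE : s ⊆ E) (hs : ∀ x ∈ s, D x ∈ E) {x : K}
    (hx : x ∈ Subfield.closure s) : D x ∈ E := by
  have hle : Subfield.closure s ≤ E := Subfield.closure_le.2 hsE
  induction hx using Subfield.closure_induction with
  | mem x hx => exact hs x hx
  | one => rw [D.map_one_eq_zero]; exact zero_mem E
  | add x y _ _ ihx ihy => rw [map_add]; exact add_mem ihx ihy
  | neg x _ ih => rw [map_neg]; exact neg_mem ih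
  | inv x hx ih =>
    rw [D.leibniz_inv, smul_eq_mul]
    exact mul_mem (neg_mem (pow_mem (inv_mem (hle hx)) 2)) ih
  | mul x y hx hy ihx ihy =>
    rw [D.leibniz, smul_eq_mul, smul_eq_mul]
    exact add_mem (mul_mem (hle hx) ihy) (mul_mem (hle hy) ihx)

/-- The difference is `p^δ(x)`, the value at `x` of `p` with its coefficients differentiated. -/
lemma derivation_aeval_sub_mem {A B : Type*} [CommRing A] [CommRing B] [Algebra A B]
    {S : Type*} [SetLike S B] [SubsemiringClass S B] {E : S} (D : Derivation ℤ B B)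
    (hD : ∀ a : A, D (algebraMap A B a) ∈ E) {x : B} (hx : x ∈ E) (p : A[X]) :
    D (aeval x p) - aeval x (derivative p) * D x ∈ E := by
  rw [D.apply_aeval_eq, smul_eq_mul, add_sub_cancel_right]
  exact AddSubmonoidClass.finsuppSum_mem E _ _ fun i _ => mul_mem (pow_mem hx i) (hD (p.coeff i))

lemma derivation_mem_of_isSeparable {F K : Type*} [Field F] [Field K] [Algebra F K]
    (D : Derivation ℤ K K) {E : IntermediateField F K} (hD : ∀ a : F, D (algebraMap F K a) ∈ E)
    {x : K} (hx : x ∈ E) (hsep : IsSeparable F x) : D x ∈ E := by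
  have hne : aeval x (derivative (minpoly F x)) ≠ 0 :=
    hsep.aeval_derivative_ne_zero (minpoly.aeval F x)
  have hderiv : aeval x (derivative (minpoly F x)) ∈ E := by
    rw [E.aeval_coe ⟨x, hx⟩]
    exact SetLike.coe_mem _
  have hmul : aeval x (derivative (minpoly F x)) * D x ∈ E := by
    simpa only [minpoly.aeval, map_zero, zero_sub, neg_mem_iff] using
      derivation_aeval_sub_mem D hD hx (minpoly F x)
  rw [← inv_mul_cancel_left₀ hne (D x)]
  exact mul_mem (inv_mem hderiv) hmul

section IterateAdjoin

variable {K : Type*} [Field K]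

/-- The subfield `K₀(u, δ u, …, δ^{n-1} u)`, where `K₀` is the subfield generated by the set `s`;
these are the steps of the tower that a derivation `δ` climbs one at a time. -/
def iterateAdjoin (δ : K → K) (s : Set K) (u : K) (n : ℕ) : Subfield K :=
  Subfield.closure (s ∪ (fun i : ℕ => δ^[i] u) '' Set.Iio n)

lemma iterateAdjoin_mono (δ : K → K) (s : Set K) (u : K) : Monotone (iterateAdjoin δ s u) :=
  fun _ _ hmn => Subfield.closure_mono <|
    Set.union_subset_union_right s (Set.image_mono (Set.Iio_subset_Iio hmn))

lemma subset_iterateAdjoin (δ : K → K) (s : Set K) (u : K) (n : ℕ) :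
    s ⊆ iterateAdjoin δ s u n :=
  Set.subset_union_left.trans Subfield.subset_closure

lemma iterate_mem_iterateAdjoin (δ : K → K) (s : Set K) (u : K) {i n : ℕ} (hi : i < n) :
    δ^[i] u ∈ iterateAdjoin δ s u n :=
  Subfield.subset_closure (Or.inr ⟨i, hi, rfl⟩)

lemma closure_union_singleton_le_iterateAdjoin_succ (δ : K → K) (s : Set K) (u : K) (n : ℕ) :
    Subfield.closure (s ∪ {u}) ≤ iterateAdjoin δ s u (n + 1) :=
  Subfield.closure_le.2 <| Set.union_subset (subset_iterateAdjoin δ s u _) <|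
    Set.singleton_subset_iff.2 (iterate_mem_iterateAdjoin δ s u n.succ_pos)

lemma derivation_mem_iterateAdjoin_succ (D : Derivation ℤ K K) {s : Set K} {u : K} {n : ℕ}
    (hs : ∀ b ∈ s, D b ∈ iterateAdjoin D s u (n + 1)) {x : K} (hx : x ∈ iterateAdjoin D s u n) :
    D x ∈ iterateAdjoin D s u (n + 1) := by
  refine derivation_mem_of_mem_closure D
    (Subfield.closure_le.1 (iterateAdjoin_mono D s u n.le_succ)) ?_ hx
  rintro _ (hb | ⟨i, hi, rfl⟩)
  · exact hs _ hb
  · rw [← Function.iterate_succ_apply' D i u]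
    exact iterate_mem_iterateAdjoin D s u (Nat.succ_lt_succ hi)

theorem algebraic_closed_under_successor_general (D : Derivation ℤ K K) {s : Set K} {u : K}
    {h : ℕ} (hs : ∀ b ∈ s, D b ∈ iterateAdjoin D s u (h + 1))
    (hsep : IsSeparable (iterateAdjoin D s u h) (D^[h] u)) :
    D^[h + 1] u ∈ iterateAdjoin D s u (h + 1) := by
  rw [Function.iterate_succ_apply']
  exact derivation_mem_of_isSeparable D
    (E := Subfield.extendScalars (iterateAdjoin_mono D s u h.le_succ))
    (fun a => derivation_mem_iterateAdjoin_succ D hs a.2)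
    (iterate_mem_iterateAdjoin D s u h.lt_succ_self) hsep

end IterateAdjoin

/-- Second Claim in the proof of Lemma 6 (lem:fields_intersection): let `K` be a field of
characteristic zero with a derivation `δ`, `K₀ ⊆ K` a subfield, and `u ∈ K` with
`δ(b) ∈ K₀(u)` for every `b ∈ K₀`.  If `δ^h(u)` is algebraic over
`K₀(u, δ(u), …, δ^{h−1}(u))`, then `δ^{h+1}(u)` is algebraic over
`K₀(u, δ(u), …, δ^h(u))`. -/
theorem algebraic_closed_under_successor
    {K : Type*} [Field K] [CharZero K]
    (δ : K → K)
    (hδadd : ∀ a b : K, δ (a + b) = δ a + δ b)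
    (hδmul : ∀ a b : K, δ (a * b) = δ a * b + a * δ b)
    (K₀ : Subfield K) (u : K)
    (hder : ∀ b ∈ K₀, δ b ∈ Subfield.closure ((K₀ : Set K) ∪ {u}))
    (h : ℕ)
    (halg : IsAlgebraic
      (↥(Subfield.closure ((K₀ : Set K) ∪ ((fun i : ℕ => δ^[i] u) '' Set.Iio h))))
      (δ^[h] u)) :
    IsAlgebraic
      (↥(Subfield.closure ((K₀ : Set K) ∪ ((fun i : ℕ => δ^[i] u) '' Set.Iio (h + 1)))))
      (δ^[h + 1] u) := by
  obtain ⟨D, rfl⟩ := exists_derivation_coe_eq δ hδadd hδmul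
  have hmem : D^[h + 1] u ∈ iterateAdjoin D K₀ u (h + 1) :=
    algebraic_closed_under_successor_general D
      (fun b hb => closure_union_singleton_le_iterateAdjoin_succ D K₀ u h (hder b hb))
      (minpoly.irreducible halg.isIntegral).separable
  exact isAlgebraic_algebraMap (⟨_, hmem⟩ : iterateAdjoin D K₀ u (h + 1))
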